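/- For every n ≥ 2, the Abelianisation J_n/[J_n, J_n] of the cactus group J_n is isomorphic to (ℤ/2ℤ)^{n−1}. -/

import Mathlib

/-- Generators of the cactus group `J n`: pairs `(p, q)` with `1 ≤ p < q ≤ n`. -/
abbrev CactusGen (n : ℕ) := {pq : ℕ × ℕ // 1 ≤ pq.1 ∧ pq.1 < pq.2 ∧ pq.2 ≤ n}

/-- The defining relators of the standard presentation of the cactus group `J n`:
`σ_{p,q}² = 1`; `σ_{p,q}σ_{r,s} = σ_{r,s}σ_{p,q}` when `[p,q] ∩ [r,s] = ∅`;
and `σ_{p,q}σ_{r,s} = σ_{p+q-s,p+q-r}σ_{p,q}` when `[r,s] ⊆ [p,q]`. -/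
def cactusRels (n : ℕ) : Set (FreeGroup (CactusGen n)) :=
  { w | (∃ g : CactusGen n, w = FreeGroup.of g ^ 2) ∨
    (∃ g h : CactusGen n, (g.1.2 < h.1.1 ∨ h.1.2 < g.1.1) ∧
      w = FreeGroup.of g * FreeGroup.of h * (FreeGroup.of h * FreeGroup.of g)⁻¹) ∨
    (∃ g h k : CactusGen n, g.1.1 ≤ h.1.1 ∧ h.1.2 ≤ g.1.2 ∧
      k.1.1 = g.1.1 + g.1.2 - h.1.2 ∧ k.1.2 = g.1.1 + g.1.2 - h.1.1 ∧
      w = FreeGroup.of g * FreeGroup.of h * (FreeGroup.of k * FreeGroup.of g)⁻¹) }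

/-- The cactus group `J n`, as a presented group. -/
abbrev CactusGroup (n : ℕ) := PresentedGroup (cactusRels n)

/-- The generator `σ_{p,q}` of the cactus group `J n` (junk value `1` for invalid indices). -/
def cactusσ (n p q : ℕ) : CactusGroup n :=
  if h : 1 ≤ p ∧ p < q ∧ q ≤ n then PresentedGroup.of ⟨(p, q), h⟩ else 1

/-! Conjugation by `σ_{1,q}` carries `σ_{1,q-p+1}` to `σ_{p,q}`, so the class of `σ_{p,q}` in the
Abelianisation depends only on the width `q - p ∈ {1, …, n - 1}`. Conversely, the relators respect
widths, so elements of square `1` in a commutative group can be prescribed freely for the widths and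
define a homomorphism on `J_n`. Hence the classes of the `σ_{1,q}`, `2 ≤ q ≤ n`, form a basis of the
Abelianisation over `ℤ/2ℤ`. -/

theorem presentedGroup_abelianization_pow_eq_one {α : Type*} {rels : Set (FreeGroup α)} {k : ℕ}
    (hof : ∀ a : α, Abelianization.of (PresentedGroup.of a : PresentedGroup rels) ^ k = 1)
    (x : Abelianization (PresentedGroup rels)) : x ^ k = 1 := by
  have hpow : powMonoidHom k = (1 : Abelianization (PresentedGroup rels) →* _) :=
    Abelianization.hom_ext _ _ (PresentedGroup.ext hof)
  exact DFunLike.congr_fun hpow x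

namespace CactusGen

variable {n : ℕ}

/-- The width `q - p` of the interval of `σ_{p,q}`, shifted by one so that the widths
`1, …, n - 1` become the elements of `Fin (n - 1)`. -/
def widthIndex (g : CactusGen n) : Fin (n - 1) :=
  ⟨g.1.2 - g.1.1 - 1, by have := g.2; omega⟩

/-- The generator `σ_{1,i+2}`, which represents the generators of width index `i`. -/
def initial (i : Fin (n - 1)) : CactusGen n :=
  ⟨(1, i + 2), le_rfl, by lia, by lia⟩

@[simp]
theorem widthIndex_initial (i : Fin (n - 1)) : (initial i).widthIndex = i :=
  rfl

theorem widthIndex_eq_of_reflection {g h k : CactusGen n}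
    (hk₁ : k.1.1 = g.1.1 + g.1.2 - h.1.2) (hk₂ : k.1.2 = g.1.1 + g.1.2 - h.1.1) :
    h.widthIndex = k.widthIndex := by
  have := k.2
  simp only [widthIndex, Fin.mk.injEq]
  omega

end CactusGen

namespace CactusGroup

open CactusGen

variable {n : ℕ}

theorem of_sq (g : CactusGen n) : (PresentedGroup.of g : CactusGroup n) ^ 2 = 1 :=
  PresentedGroup.one_of_mem (Or.inl ⟨g, rfl⟩)

theorem isConj_of_reflection {g h k : CactusGen n} (hgh₁ : g.1.1 ≤ h.1.1) (hgh₂ : h.1.2 ≤ g.1.2)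
    (hk₁ : k.1.1 = g.1.1 + g.1.2 - h.1.2) (hk₂ : k.1.2 = g.1.1 + g.1.2 - h.1.1) :
    IsConj (PresentedGroup.of h : CactusGroup n) (PresentedGroup.of k) := by
  have hrel : (PresentedGroup.of g * PresentedGroup.of h : CactusGroup n) =
      PresentedGroup.of k * PresentedGroup.of g :=
    PresentedGroup.mk_eq_mk_of_mul_inv_mem
      (Or.inr (Or.inr ⟨g, h, k, hgh₁, hgh₂, hk₁, hk₂, rfl⟩))
  exact isConj_iff.mpr ⟨PresentedGroup.of g, mul_inv_eq_of_eq_mul hrel⟩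

theorem isConj_initial_widthIndex (g : CactusGen n) :
    IsConj (PresentedGroup.of (initial g.widthIndex) : CactusGroup n) (PresentedGroup.of g) := by
  have hg := g.2
  refine isConj_of_reflection (g := ⟨(1, g.1.2), by lia⟩) ?_ ?_ ?_ ?_ <;>
    simp only [initial, widthIndex] <;> omega

theorem abelianization_of_initial_widthIndex (g : CactusGen n) :
    Abelianization.of (PresentedGroup.of (initial g.widthIndex) : CactusGroup n) =
      Abelianization.of (PresentedGroup.of g) :=
  isConj_iff_eq.mp (Abelianization.of.map_isConj (isConj_initial_widthIndex g))

section Lift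

variable {A : Type*} [CommGroup A]

theorem freeGroup_lift_widthIndex_eq_one {f : Fin (n - 1) → A} (hf : ∀ i, f i ^ 2 = 1) :
    ∀ r ∈ cactusRels n, FreeGroup.lift (fun g : CactusGen n ↦ f g.widthIndex) r = 1 := by
  rintro r (⟨g, rfl⟩ | ⟨g, h, -, rfl⟩ | ⟨g, h, k, -, -, hk₁, hk₂, rfl⟩)
  · simp [hf]
  · simp only [map_mul, map_inv, FreeGroup.lift_apply_of]
    exact mul_inv_eq_one.mpr (mul_comm _ _)
  · simp only [map_mul, map_inv, FreeGroup.lift_apply_of, widthIndex_eq_of_reflection hk₁ hk₂]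
    exact mul_inv_eq_one.mpr (mul_comm _ _)

/-- The homomorphism from `J_n` to a commutative group that sends each generator to the element of
order dividing two prescribed for its width. -/
def liftWidth (f : Fin (n - 1) → A) (hf : ∀ i, f i ^ 2 = 1) : CactusGroup n →* A :=
  PresentedGroup.toGroup (freeGroup_lift_widthIndex_eq_one hf)

@[simp]
theorem liftWidth_of (f : Fin (n - 1) → A) (hf : ∀ i, f i ^ 2 = 1) (g : CactusGen n) :
    liftWidth f hf (PresentedGroup.of g) = f g.widthIndex :=
  PresentedGroup.toGroup.of _

end Lift

theorem abelianization_sq (x : Abelianization (CactusGroup n)) : x ^ 2 = 1 :=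
  presentedGroup_abelianization_pow_eq_one
    (fun g ↦ by rw [← map_pow, of_sq, map_one]) x

instance : Module (ZMod 2) (Additive (Abelianization (CactusGroup n))) :=
  AddCommGroup.zmodModule fun x ↦ congrArg Additive.ofMul (abelianization_sq x.toMul)

/-- The linear map on the Abelianisation of `J_n` that sends the class of each generator to the
standard basis vector of its width. -/
def widthMap (n : ℕ) :
    Additive (Abelianization (CactusGroup n)) →ₗ[ZMod 2] (Fin (n - 1) → ZMod 2) :=
  AddMonoidHom.toZModLinearMap 2 <| MonoidHom.toAdditiveLeft <| Abelianization.lift <|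
    liftWidth (fun i ↦ Multiplicative.ofAdd (Pi.single i 1)) fun i ↦
      congrArg Multiplicative.ofAdd (ZModModule.char_nsmul_eq_zero 2 (Pi.single i 1))

theorem widthMap_of (g : CactusGen n) :
    widthMap n (Additive.ofMul (Abelianization.of (PresentedGroup.of g))) =
      Pi.single g.widthIndex 1 := by
  simp [widthMap]

/-- The linear map to the Abelianisation of `J_n` that sends the `i`-th standard basis vector to the
class of `σ_{1,i+2}`. -/
noncomputable def initialMap (n : ℕ) :
    (Fin (n - 1) → ZMod 2) →ₗ[ZMod 2] Additive (Abelianization (CactusGroup n)) :=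
  Fintype.linearCombination (ZMod 2) fun i ↦
    Additive.ofMul (Abelianization.of (PresentedGroup.of (initial i)))

theorem initialMap_single (i : Fin (n - 1)) :
    initialMap n (Pi.single i 1) =
      Additive.ofMul (Abelianization.of (PresentedGroup.of (initial i))) := by
  simp [initialMap]

theorem widthMap_comp_initialMap : widthMap n ∘ₗ initialMap n = LinearMap.id :=
  (Pi.basisFun (ZMod 2) (Fin (n - 1))).ext fun i ↦ by
    simp [initialMap_single, widthMap_of]

theorem initialMap_widthMap_of (g : CactusGen n) :
    initialMap n (widthMap n (Additive.ofMul (Abelianization.of (PresentedGroup.of g)))) =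
      Additive.ofMul (Abelianization.of (PresentedGroup.of g)) := by
  rw [widthMap_of, initialMap_single, abelianization_of_initial_widthIndex]

theorem initialMap_comp_widthMap : initialMap n ∘ₗ widthMap n = LinearMap.id := by
  have hcomp : AddMonoidHom.toMultiplicative (initialMap n ∘ₗ widthMap n).toAddMonoidHom =
      MonoidHom.id _ :=
    Abelianization.hom_ext _ _ (PresentedGroup.ext initialMap_widthMap_of)
  exact LinearMap.ext fun x ↦ DFunLike.congr_fun hcomp x.toMul

/-- The isomorphism from the Abelianisation of `J_n` to `(ℤ/2ℤ)^{n-1}` under which the class of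
`σ_{p,q}` corresponds to the standard basis vector of its width `q - p`. -/
noncomputable def abelianizationEquiv (n : ℕ) :
    Additive (Abelianization (CactusGroup n)) ≃ₗ[ZMod 2] (Fin (n - 1) → ZMod 2) :=
  LinearEquiv.ofLinearMap (widthMap n) (initialMap n) widthMap_comp_initialMap
    initialMap_comp_widthMap

end CactusGroup

/-- For every `n ≥ 2`, the Abelianisation of the cactus group `J_n` is isomorphic to
`(ℤ/2ℤ)^{n-1}`. -/
theorem cactus_abelianization (n : ℕ) (hn : 2 ≤ n) :
    Nonempty (Abelianization (CactusGroup n) ≃* Multiplicative (Fin (n - 1) → ZMod 2)) :=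
  ⟨AddEquiv.toMultiplicativeRight (CactusGroup.abelianizationEquiv n).toAddEquiv⟩
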